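/- If n ≥ 1, r ≥ 1 and gcd(n, r) > 1, then for every number of states q the n prisoners do not have a symmetric winning strategy for r rooms with q states. -/

import Mathlib

namespace PrisonersGame

/-- A deterministic strategy for a prisoner: given the list of states observed
on previous visits and the state observed on the current visit, return the
state to leave the room in and whether to declare. -/
def Strategy : Type := List ℕ → ℕ → ℕ × Bool

/-- A strategy is valid for `q` states if, whenever all states observed so far
are among `0, …, q-1`, the state it leaves the room in is among `0, …, q-1`. -/
def Strategy.ValidFor (q : ℕ) (σ : Strategy) : Prop :=
  ∀ (h : List ℕ) (s : ℕ), (∀ x ∈ h, x < q) → s < q → (σ h s).1 < q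

/-- A schedule: at each time step, one prisoner is led into one room. -/
def Schedule (n r : ℕ) : Type := ℕ → Fin n × Fin r

/-- A schedule is fair if every prisoner is led into every room infinitely often. -/
def Schedule.Fair {n r : ℕ} (sched : Schedule n r) : Prop :=
  ∀ (p : Fin n) (room : Fin r), {t : ℕ | sched t = (p, room)}.Infinite

/-- The state of play just before step `t`: the current states of the rooms, and
the list of states observed so far by each prisoner. All rooms start in state `0`. -/
def run {n r : ℕ} (strat : Fin n → Strategy) (sched : Schedule n r) :
    ℕ → (Fin r → ℕ) × (Fin n → List ℕ)
  | 0 => (fun _ => 0, fun _ => [])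
  | t + 1 =>
      let prev := run strat sched t
      let p := (sched t).1
      let room := (sched t).2
      let obs := prev.1 room
      (Function.update prev.1 room (strat p (prev.2 p) obs).1,
        Function.update prev.2 p (prev.2 p ++ [obs]))

/-- The prisoner visiting at step `t` declares during that visit. -/
def declaresAt {n r : ℕ} (strat : Fin n → Strategy) (sched : Schedule n r)
    (t : ℕ) : Prop :=
  (strat (sched t).1 ((run strat sched t).2 (sched t).1)
      ((run strat sched t).1 (sched t).2)).2 = true

/-- Every prisoner has visited every room by step `t` (inclusive). -/
def allVisitedBy {n r : ℕ} (sched : Schedule n r) (t : ℕ) : Prop :=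
  ∀ (p : Fin n) (room : Fin r), ∃ s ≤ t, sched s = (p, room)

/-- A strategy profile is winning if, for every fair schedule, some prisoner
eventually declares, and no prisoner ever declares at a time before every
prisoner has visited every room. -/
def Winning {n r : ℕ} (strat : Fin n → Strategy) : Prop :=
  ∀ sched : Schedule n r, sched.Fair →
    (∃ t, declaresAt strat sched t) ∧
    ∀ t, declaresAt strat sched t → allVisitedBy sched t

/-- `n` prisoners have a winning strategy for `r` rooms with `q` states. -/
def HasWinningStrategy (n r q : ℕ) : Prop :=
  ∃ strat : Fin n → Strategy, (∀ p, (strat p).ValidFor q) ∧ Winning (n := n) (r := r) strat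

/-- `n` prisoners have a symmetric winning strategy (all prisoners use the
same strategy) for `r` rooms with `q` states. -/
def HasSymmetricWinningStrategy (n r q : ℕ) : Prop :=
  ∃ σ : Strategy, σ.ValidFor q ∧ Winning (n := n) (r := r) (fun _ => σ)

end PrisonersGame

/-!
Let `d = gcd n r > 1`, `n = a * d`, `r = b * d`, and split the prisoners into `a` and the rooms into
`b` classes of size `d`. A schedule `S` for `a` prisoners and `b` rooms is blown up to `n` prisoners
and `r` rooms by replacing a visit of `p` to `x` with a round of `d` visits, in which the members of
class `p` enter the members of class `x` along a bijection `K m` of the indices. Between rounds,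
members of a class cannot be told apart, so under a common strategy the declarations in the blow-up
are those of `S`, whatever the bijections. Choosing the `K m` so that the blow-up is fair, a
declaration occurs in some round `m`. It still occurs in round `m` after `K 0, …, K m` have been
replaced by the identity and the later bijections kept, but then prisoners and rooms with different
indices have not met.
-/

namespace PrisonersGame

theorem exists_seq_frequently_eq (α : Type*) [Countable α] [Nonempty α] :
    ∃ u : ℕ → α, ∀ x, ∃ᶠ m in Filter.atTop, u m = x := by
  obtain ⟨v, hv⟩ := exists_surjective_nat α
  refine ⟨fun m => v m.unpair.2, fun x => Nat.frequently_atTop_iff_infinite.mpr ?_⟩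
  obtain ⟨i, rfl⟩ := hv x
  refine Set.infinite_of_injective_forall_mem (f := fun k => Nat.pair k i) ?_ ?_
  · exact fun k l hkl => (Nat.pair_eq_pair.mp hkl).1
  · simp

section Sweep

variable {α β γ : Type*} {d : ℕ}

/-- The pullback to `α ≃ β × Fin d` of `g'` on the indices below `j` and of `g` on the others: the
`j`-th stage when `g` is replaced by `g'` one index at a time. -/
def sweep (c : α ≃ β × Fin d) (g g' : β → γ) (j : ℕ) (x : α) : γ :=
  if (c x).2 < j then g' (c x).1 else g (c x).1

theorem sweep_zero (c : α ≃ β × Fin d) (g g' : β → γ) :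
    sweep c g g' 0 = fun x => g (c x).1 := by
  simp [sweep, funext_iff]

theorem sweep_card (c : α ≃ β × Fin d) (g g' : β → γ) :
    sweep c g g' d = fun x => g' (c x).1 := by
  simp [sweep, funext_iff]

theorem sweep_symm_apply (c : α ≃ β × Fin d) (g g' : β → γ) (b : β) (j : Fin d) :
    sweep c g g' j (c.symm (b, j)) = g b := by
  simp [sweep]

theorem update_sweep [DecidableEq α] [DecidableEq β] (c : α ≃ β × Fin d) (g : β → γ) (b : β)
    (v : γ) (j : Fin d) :
    Function.update (sweep c g (Function.update g b v) j) (c.symm (b, j)) v =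
      sweep c g (Function.update g b v) (j + 1) := by
  ext x
  obtain ⟨⟨y, i⟩, rfl⟩ := c.symm.surjective x
  simp only [sweep, Function.update_apply, c.symm.injective.eq_iff, Equiv.apply_symm_apply,
    Prod.mk.injEq, Fin.ext_iff]
  grind

/-- The identification `c` with the indices renamed by `π`: index `j` now refers to what `c` calls
index `π j`. -/
def permuteIndex (c : α ≃ β × Fin d) (π : Equiv.Perm (Fin d)) : α ≃ β × Fin d :=
  c.trans (Equiv.prodCongrRight fun _ => π.symm)

theorem permuteIndex_apply_fst (c : α ≃ β × Fin d) (π : Equiv.Perm (Fin d)) (x : α) :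
    (permuteIndex c π x).1 = (c x).1 :=
  rfl

theorem permuteIndex_symm_apply (c : α ≃ β × Fin d) (π : Equiv.Perm (Fin d)) (b : β) (j : Fin d) :
    (permuteIndex c π).symm (b, j) = c.symm (b, π j) :=
  rfl

end Sweep

section BlowUp

variable {n r a b d : ℕ} [NeZero d] (e : Fin n ≃ Fin a × Fin d) (f : Fin r ≃ Fin b × Fin d)
  (S : Schedule a b) (K : ℕ → Equiv.Perm (Fin d))

/-- The blow-up of a schedule `S` for `a` prisoners and `b` rooms to `a` classes of `d` prisoners
and `b` classes of `d` rooms, identified by `e` and `f`. Round `m` consists of the steps `m * d + j`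
with `j < d`; in step `j` the prisoner of index `j` in the class scheduled by `S` enters the room of
index `K m j` in the class scheduled by `S`. -/
def Schedule.blowUp : Schedule n r := fun t =>
  let (m, j) := Nat.divModEquiv d t
  (e.symm ((S m).1, j), (permuteIndex f (K m)).symm ((S m).2, j))

theorem blowUp_mul_add (m : ℕ) (j : Fin d) :
    S.blowUp e f K (m * d + j) =
      (e.symm ((S m).1, j), (permuteIndex f (K m)).symm ((S m).2, j)) := by
  have round_and_index : Nat.divModEquiv d (m * d + j) = (m, j) :=
    (Nat.divModEquiv d).apply_symm_apply (m, j)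
  simp only [Schedule.blowUp, round_and_index]

variable (strat : Fin a → Strategy)

theorem run_blowUp_within_round {m : ℕ}
    (hstart : run (fun p => strat (e p).1) (S.blowUp e f K) (m * d) =
      (fun x => (run strat S m).1 (f x).1, fun p => (run strat S m).2 (e p).1))
    {j : ℕ} (hj : j ≤ d) :
    run (fun p => strat (e p).1) (S.blowUp e f K) (m * d + j) =
      (sweep (permuteIndex f (K m)) (run strat S m).1 (run strat S (m + 1)).1 j,
        sweep e (run strat S m).2 (run strat S (m + 1)).2 j) := by
  induction j with
  | zero => rwa [Nat.add_zero, sweep_zero, sweep_zero]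
  | succ j ih =>
    have visit := blowUp_mul_add e f S K m ⟨j, hj⟩
    rw [← Nat.add_assoc, run]
    simp only [ih (Nat.le_of_succ_le hj), visit, Equiv.apply_symm_apply,
      sweep_symm_apply _ _ _ _ ⟨j, hj⟩]
    exact Prod.ext (update_sweep _ _ _ _ ⟨j, hj⟩) (update_sweep _ _ _ _ ⟨j, hj⟩)

theorem run_blowUp_mul (m : ℕ) :
    run (fun p => strat (e p).1) (S.blowUp e f K) (m * d) =
      (fun x => (run strat S m).1 (f x).1, fun p => (run strat S m).2 (e p).1) := by
  induction m with
  | zero => rw [Nat.zero_mul]; rfl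
  | succ m ih =>
    rw [Nat.succ_mul, run_blowUp_within_round e f S K strat ih le_rfl, sweep_card, sweep_card]
    simp only [permuteIndex_apply_fst]

theorem declaresAt_blowUp_iff (t : ℕ) :
    declaresAt (fun p => strat (e p).1) (S.blowUp e f K) t ↔ declaresAt strat S (t / d) := by
  obtain ⟨⟨m, j⟩, rfl⟩ := (Nat.divModEquiv d).symm.surjective t
  have round_eq : (m * d + j) / d = m :=
    congrArg Prod.fst ((Nat.divModEquiv d).apply_symm_apply (m, j))
  simp only [Nat.divModEquiv_symm_apply, declaresAt, round_eq, blowUp_mul_add,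
    run_blowUp_within_round e f S K strat (run_blowUp_mul e f S K strat m) j.isLt.le,
    sweep_symm_apply, Equiv.apply_symm_apply]

variable {S K}

theorem fair_blowUp
    (h : ∀ p x i j, ∃ᶠ m in Filter.atTop, S m = (p, x) ∧ K m i = j) :
    (S.blowUp e f K).Fair := by
  intro p x
  have rounds_infinite := Nat.frequently_atTop_iff_infinite.mp (h (e p).1 (f x).1 (e p).2 (f x).2)
  have step_injective : Function.Injective fun m => m * d + ((e p).2 : ℕ) :=
    (add_left_injective _).comp (mul_left_injective₀ (NeZero.ne d))
  refine (rounds_infinite.image step_injective.injOn).mono ?_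
  rintro _ ⟨m, ⟨hS, hK⟩, rfl⟩
  simp [blowUp_mul_add, permuteIndex_symm_apply, hS, hK]

theorem index_eq_of_blowUp_eq {t : ℕ} {p : Fin n} {x : Fin r} (hK : K (t / d) = 1)
    (h : S.blowUp e f K t = (p, x)) : (e p).2 = (f x).2 := by
  simp only [Schedule.blowUp, Nat.divModEquiv_apply, hK, permuteIndex_symm_apply,
    Equiv.Perm.one_apply, Prod.mk.injEq] at h
  rw [← h.1, ← h.2, Equiv.apply_symm_apply, Equiv.apply_symm_apply]

end BlowUp

theorem not_winning_of_constant_on_classes {n r a b d : ℕ} [NeZero a] [NeZero b] (hd : 1 < d)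
    (e : Fin n ≃ Fin a × Fin d) (f : Fin r ≃ Fin b × Fin d) (strat : Fin a → Strategy) :
    ¬ Winning (r := r) fun p => strat (e p).1 := by
  intro hwin
  have : NeZero d := NeZero.of_gt hd
  obtain ⟨u, hu⟩ := exists_seq_frequently_eq ((Fin a × Fin b) × Equiv.Perm (Fin d))
  let S : Schedule a b := fun m => (u m).1
  let K (m : ℕ) : Equiv.Perm (Fin d) := (u m).2
  have all_meet (p x i j) : ∃ᶠ m in Filter.atTop, S m = (p, x) ∧ K m i = j :=
    (hu ((p, x), Equiv.swap i j)).mono fun m hm => by simp [S, K, hm]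
  obtain ⟨t, ht⟩ := (hwin _ (fair_blowUp e f all_meet)).1
  let K' (m : ℕ) : Equiv.Perm (Fin d) := if m ≤ t / d then 1 else K m
  have all_meet' (p x i j) : ∃ᶠ m in Filter.atTop, S m = (p, x) ∧ K' m i = j :=
    ((all_meet p x i j).and_eventually (Filter.eventually_gt_atTop (t / d))).mono
      fun m ⟨hm, hlt⟩ => by simpa only [K', if_neg hlt.not_ge] using hm
  have ht' : declaresAt (fun p => strat (e p).1) (S.blowUp e f K') t := by
    rwa [declaresAt_blowUp_iff] at ht ⊢
  obtain ⟨s, hst, hs⟩ := (hwin _ (fair_blowUp e f all_meet')).2 t ht'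
    (e.symm (0, ⟨0, by lia⟩)) (f.symm (0, ⟨1, hd⟩))
  have zero_eq_one := index_eq_of_blowUp_eq e f (if_pos (Nat.div_le_div_right hst)) hs
  simp at zero_eq_one

end PrisonersGame

open PrisonersGame in
theorem no_symmetric_strategy_of_not_coprime_general (n r : ℕ) (hn : 1 ≤ n) (hr : 1 ≤ r)
    (h : 1 < Nat.gcd n r) (σ : Strategy) : ¬ Winning (n := n) (r := r) fun _ => σ := by
  obtain ⟨a, ha⟩ := Nat.gcd_dvd_left n r
  obtain ⟨b, hb⟩ := Nat.gcd_dvd_right n r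
  rw [Nat.mul_comm] at ha hb
  have : NeZero a := ⟨by rintro rfl; lia⟩
  have : NeZero b := ⟨by rintro rfl; lia⟩
  exact not_winning_of_constant_on_classes h ((finCongr ha).trans finProdFinEquiv.symm)
    ((finCongr hb).trans finProdFinEquiv.symm) fun _ => σ

open PrisonersGame in
/-- If `gcd(n, r) > 1`, then for every number of states `q` the `n` prisoners
do not have a symmetric winning strategy for `r` rooms with `q` states. -/
theorem no_symmetric_strategy_of_not_coprime (n r : ℕ) (hn : 1 ≤ n)
    (hr : 1 ≤ r) (h : 1 < Nat.gcd n r) :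
    ∀ q : ℕ, ¬ HasSymmetricWinningStrategy n r q := fun _ ⟨σ, _, hwin⟩ =>
  no_symmetric_strategy_of_not_coprime_general n r hn hr h σ hwin
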